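/- arXiv:1605.00818 — 2 statements merged into one kernel-verified Lean document; each statement's English description precedes it below -/
import Mathlib

section
/- (8, 7) ∈ HWP(C_3[15]; 3, 15); that is, the edge set of C_3[15] can be partitioned into 8 C_3-factors and 7 C_15-factors. -/
open SimpleGraph

/-- `F` is a `C_k`-factor of `H`: a spanning subgraph of `H` that is 2-regular
and each of whose connected components has exactly `k` vertices. -/
def IsCycleFactor {V : Type*} (H F : SimpleGraph V) (k : ℕ) : Prop :=
  F ≤ H ∧ (∀ v, (F.neighborSet v).ncard = 2) ∧
    ∀ v : V, {w | F.Reachable v w}.ncard = k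

/-- The family of graphs `F` partitions the edge set of `H`. -/
def IsDecomp {V ι : Type*} (H : SimpleGraph V) (F : ι → SimpleGraph V) : Prop :=
  (Pairwise fun i j => Disjoint (F i).edgeSet (F j).edgeSet) ∧
  ∀ e, e ∈ H.edgeSet ↔ ∃ i, e ∈ (F i).edgeSet

/-- `HW H m n α β`: the edge set of `H` can be partitioned into
`α` `C_m`-factors and `β` `C_n`-factors. -/
def HW {V : Type*} (H : SimpleGraph V) (m n α β : ℕ) : Prop :=
  ∃ F : Fin α ⊕ Fin β → SimpleGraph V,
    (∀ i, IsCycleFactor H (F (Sum.inl i)) m) ∧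
    (∀ j, IsCycleFactor H (F (Sum.inr j)) n) ∧
    IsDecomp H F

/-- `(α, β) ∈ HWP(v; m, n)` for odd `v`: `K_v` has a 2-factorization into
`α` `C_m`-factors and `β` `C_n`-factors. -/
def HWPodd (v m n α β : ℕ) : Prop := HW (⊤ : SimpleGraph (Fin v)) m n α β

/-- `F ≤ H` is a vertex-disjoint union of `c` cycles of length `k`:
2-regular on its support, every component has `k` vertices, and the support
has `k * c` vertices. -/
def IsCycleClass {V : Type*} (H F : SimpleGraph V) (k c : ℕ) : Prop :=
  F ≤ H ∧ (∀ v ∈ F.support, (F.neighborSet v).ncard = 2) ∧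
  (∀ v ∈ F.support, {w | F.Reachable v w}.ncard = k) ∧
  F.support.ncard = k * c

/-- An almost resolvable `k`-cycle system of order `v`: a partition of the
edges of `K_v` into `(v-1)/2` almost parallel classes (each a vertex-disjoint
union of `(v-1)/k` `k`-cycles) together with one half-parallel class
(a vertex-disjoint union of `(v-1)/(2k)` `k`-cycles). -/
def IsARCS (k v : ℕ) : Prop :=
  ∃ F : Fin ((v - 1) / 2) ⊕ Unit → SimpleGraph (Fin v),
    (∀ i, IsCycleClass ⊤ (F (Sum.inl i)) k ((v - 1) / k)) ∧
    (∀ j, IsCycleClass ⊤ (F (Sum.inr j)) k ((v - 1) / (2 * k))) ∧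
    IsDecomp (⊤ : SimpleGraph (Fin v)) F

/-- The lexicographic product `C_m[n]` of the cycle `C_m` with the empty graph
on `n` vertices, on vertex set `ZMod m × ZMod n`. -/
def lexCycle (m n : ℕ) : SimpleGraph (ZMod m × ZMod n) :=
  SimpleGraph.fromRel (fun a b => a.1 - b.1 = 1)

/-- The Cayley graph of an additive group with connection set `S`. -/
def cayley {Γ : Type*} [AddGroup Γ] (S : Set Γ) : SimpleGraph Γ :=
  SimpleGraph.fromRel (fun a b => a - b ∈ S)

/-! Joining each vertex `v` to `f v`, for a permutation `f` of the vertices, gives a graph whose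
components are the cycles of `f`. For `d : ZMod m → ZMod n` take
`f (p, a) = (p + 1, a + d p)`. After `m` steps `f` returns to the part it started from, with the
second coordinate increased by `s = ∑ p, d p`, so all its cycles have length `m` times the additive
order of `s`. A family `d i` yields a decomposition of `C_m[n]` as soon as `i ↦ d i p` is a
bijection onto `ZMod n` for each `p`.

When `m - 1` is invertible modulo `n`, let the index `y` range over `ZMod n`, fix a permutation `π`
of `ZMod n`, put `d y 0 = π y`, and let the other `d y p` be `-y / (m - 1)`. Then `s = π y - y`:
the fixed points of `π` give `C_m`-factors, and the points shifted by an element of order `k` give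
`C_{mk}`-factors. For `m = 3`, `n = 15`, the permutation `(0 3 6 9 12)(1 4)` has 8 fixed points and
shifts the other 7 by nonzero multiples of 3, which have order 5. -/

section PermGraph

variable {V : Type*}

/-- The functional graph of a permutation with directions and loops forgotten: `v` is joined to
`f v` whenever `f v ≠ v`. -/
def permGraph (f : Equiv.Perm V) : SimpleGraph V :=
  SimpleGraph.fromRel fun u v => f u = v

variable {f : Equiv.Perm V}

lemma neighborSet_permGraph {v : V} (hv : f v ≠ v) :
    (permGraph f).neighborSet v = {f v, f.symm v} := by
  ext w
  simp only [mem_neighborSet, permGraph, fromRel_adj, Set.mem_insert_iff, Set.mem_singleton_iff,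
    Equiv.eq_symm_apply, eq_comm (a := w) (b := f v)]
  refine and_iff_right_of_imp ?_
  rintro h rfl
  exact hv (or_self_iff.1 h)

lemma ncard_neighborSet_permGraph {v : V} (hv : f (f v) ≠ v) :
    ((permGraph f).neighborSet v).ncard = 2 := by
  rw [neighborSet_permGraph fun h => hv (by rw [h, h])]
  exact Set.ncard_pair fun h => hv (by rw [h, f.apply_symm_apply])

lemma reachable_permGraph_apply (v : V) : (permGraph f).Reachable v (f v) := by
  by_cases hv : v = f v
  · exact hv ▸ Reachable.rfl
  · exact Adj.reachable ⟨hv, Or.inl rfl⟩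

lemma reachable_permGraph_iff_sameCycle {v w : V} :
    (permGraph f).Reachable v w ↔ f.SameCycle v w := by
  constructor
  · rintro ⟨walk⟩
    induction walk with
    | nil => exact .rfl
    | cons hadj _ ih =>
      rcases hadj.2 with rfl | rfl
      · exact Equiv.Perm.sameCycle_apply_left.1 ih
      · exact Equiv.Perm.sameCycle_apply_left.2 ih
  · rintro ⟨k, rfl⟩
    induction k with
    | zero => exact Reachable.rfl
    | succ k ih =>
      rw [zpow_add_one, (Commute.zpow_self f k).eq]
      exact ih.trans (reachable_permGraph_apply _)
    | pred k ih =>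
      refine ih.trans (Reachable.symm ?_)
      have := reachable_permGraph_apply (f := f) ((f ^ (-(k : ℤ) - 1)) v)
      rwa [← Equiv.Perm.mul_apply, ← zpow_one_add, add_sub_cancel] at this

lemma ncard_reachable_permGraph (v : V) :
    {w | (permGraph f).Reachable v w}.ncard = Function.minimalPeriod f v := by
  have reachable_eq_orbit :
      {w | (permGraph f).Reachable v w} = MulAction.orbit (Subgroup.zpowers f) v := by
    ext w
    simp [reachable_permGraph_iff_sameCycle, Equiv.Perm.SameCycle, MulAction.mem_orbit_iff,
      Subgroup.exists_zpowers, Subgroup.smul_def]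
  rw [reachable_eq_orbit, ← Nat.card_coe_set_eq,
    Nat.card_congr (MulAction.orbitZPowersEquiv f v), Nat.card_zmod]
  rfl

lemma isCycleFactor_permGraph {H : SimpleGraph V} {k : ℕ} (hle : permGraph f ≤ H) (hk : 3 ≤ k)
    (hperiod : ∀ v, Function.minimalPeriod f v = k) : IsCycleFactor H (permGraph f) k := by
  refine ⟨hle, fun v => ncard_neighborSet_permGraph fun hv => ?_, fun v => ?_⟩
  · have two_periodic : Function.IsPeriodicPt f 2 v := hv
    have := two_periodic.minimalPeriod_le two_pos
    have := hperiod v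
    omega
  · rw [ncard_reachable_permGraph, hperiod]

lemma isDecomp_permGraph {ι : Type*} {H : SimpleGraph V} {f : ι → Equiv.Perm V}
    (hasymm : ∀ i j v, f j (f i v) ≠ v) (hinj : ∀ v, Function.Injective fun i => f i v)
    (hadj : ∀ u v, H.Adj u v ↔ ∃ i, f i u = v ∨ f i v = u) :
    IsDecomp H fun i => permGraph (f i) := by
  constructor
  · intro i j hij
    rw [Set.disjoint_left]
    rintro ⟨u, v⟩ ⟨-, hi⟩ ⟨-, hj⟩
    rcases hi with hi | hi <;> rcases hj with hj | hj
    · exact hij (hinj u (hi.trans hj.symm))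
    · exact hasymm i j u (by rw [hi, hj])
    · exact hasymm i j v (by rw [hi, hj])
    · exact hij (hinj v (hi.trans hj.symm))
  · rintro ⟨u, v⟩
    have ne_of_adj (h : ∃ i, f i u = v ∨ f i v = u) : u ≠ v := by
      rintro rfl
      obtain ⟨i, hi⟩ := h
      exact hasymm i i u (by simp only [or_self] at hi; rw [hi, hi])
    change H.Adj u v ↔ ∃ i, (permGraph (f i)).Adj u v
    simp only [permGraph, fromRel_adj, exists_and_left, hadj]
    exact ⟨fun h => ⟨ne_of_adj h, h⟩, And.right⟩

end PermGraph

section SkewRotation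

variable {m : ℕ} {A : Type*} [AddCommGroup A]

/-- The skew product of the rotation `p ↦ p + 1` of `ZMod m` with translations of `A`: passing
through `p` adds `d p` to the second coordinate. For `A = ZMod n` its cycles are cycles of
`C_m[n]`. -/
def skewRotation (d : ZMod m → A) : Equiv.Perm (ZMod m × A) where
  toFun v := (v.1 + 1, v.2 + d v.1)
  invFun v := (v.1 - 1, v.2 - d (v.1 - 1))
  left_inv v := by simp
  right_inv v := by simp

lemma skewRotation_apply (d : ZMod m → A) (v : ZMod m × A) :
    skewRotation d v = (v.1 + 1, v.2 + d v.1) := rfl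

lemma skewRotation_iterate (d : ZMod m → A) (k : ℕ) (v : ZMod m × A) :
    (skewRotation d)^[k] v = (v.1 + k, v.2 + ∑ i ∈ Finset.range k, d (v.1 + i)) := by
  induction k with
  | zero => simp
  | succ k ih =>
    rw [Function.iterate_succ_apply', ih, skewRotation_apply, Finset.sum_range_succ]
    push_cast
    simp only [add_assoc]

variable [NeZero m]

lemma sum_range_add_natCast_zmod (d : ZMod m → A) (p : ZMod m) :
    ∑ i ∈ Finset.range m, d (p + i) = ∑ q, d q := by
  have sum_range_natCast (g : ZMod m → A) : ∑ i ∈ Finset.range m, g i = ∑ q, g q :=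
    Finset.sum_nbij' (fun i => (i : ZMod m)) ZMod.val (by simp)
      (fun q _ => Finset.mem_range.2 q.val_lt)
      (fun i hi => ZMod.val_cast_of_lt (Finset.mem_range.1 hi)) (by simp) (by simp)
  rw [sum_range_natCast fun q => d (p + q)]
  exact Equiv.sum_comp (Equiv.addLeft p) d

lemma skewRotation_iterate_mul (d : ZMod m → A) (k : ℕ) (v : ZMod m × A) :
    (skewRotation d)^[m * k] v = (v.1, v.2 + k • ∑ p, d p) := by
  induction k with
  | zero => simp
  | succ k ih =>
    rw [Nat.mul_succ, add_comm, Function.iterate_add_apply, ih, skewRotation_iterate,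
      sum_range_add_natCast_zmod, ZMod.natCast_self, add_zero, add_assoc, succ_nsmul]

lemma minimalPeriod_skewRotation (d : ZMod m → A) (v : ZMod m × A) :
    Function.minimalPeriod (skewRotation d) v = m * addOrderOf (∑ p, d p) := by
  refine eq_of_forall_dvd fun k => ?_
  rw [← Function.isPeriodicPt_iff_minimalPeriod_dvd]
  have dvd_of_periodic (h : Function.IsPeriodicPt (skewRotation d) k v) : m ∣ k := by
    have hfst := congrArg Prod.fst ((skewRotation_iterate d k v).symm.trans h)
    exact (ZMod.natCast_eq_zero_iff k m).1 (add_eq_left.1 hfst)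
  have periodic_mul_iff (j : ℕ) :
      Function.IsPeriodicPt (skewRotation d) (m * j) v ↔ addOrderOf (∑ p, d p) ∣ j := by
    rw [Function.IsPeriodicPt, Function.IsFixedPt, skewRotation_iterate_mul, Prod.ext_iff,
      addOrderOf_dvd_iff_nsmul_eq_zero]
    simp
  constructor
  · intro h
    obtain ⟨j, rfl⟩ := dvd_of_periodic h
    exact mul_dvd_mul_left m ((periodic_mul_iff j).1 h)
  · rintro ⟨j, rfl⟩
    rw [mul_assoc]
    exact (periodic_mul_iff _).2 (dvd_mul_right _ _)

end SkewRotation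

section LexCycle

variable {m n : ℕ}

lemma natCast_zmod_ne_zero_of_lt {k : ℕ} (hk : k ≠ 0) (hkm : k < m) : (k : ZMod m) ≠ 0 :=
  fun h => Nat.not_dvd_of_pos_of_lt (Nat.pos_of_ne_zero hk) hkm ((ZMod.natCast_eq_zero_iff k m).1 h)

lemma lexCycle_adj (hm : 2 ≤ m) {u v : ZMod m × ZMod n} :
    (lexCycle m n).Adj u v ↔ v.1 = u.1 + 1 ∨ u.1 = v.1 + 1 := by
  have one_ne_zero_zmod : (1 : ZMod m) ≠ 0 := mod_cast natCast_zmod_ne_zero_of_lt one_ne_zero hm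
  simp only [lexCycle, fromRel_adj, sub_eq_iff_eq_add', or_comm (a := u.1 = v.1 + 1)]
  refine and_iff_right_of_imp ?_
  rintro h rfl
  simp [one_ne_zero_zmod] at h

lemma permGraph_skewRotation_le_lexCycle (hm : 2 ≤ m) (d : ZMod m → ZMod n) :
    permGraph (skewRotation d) ≤ lexCycle m n := by
  rintro u v ⟨-, rfl | rfl⟩
  · exact (lexCycle_adj hm).2 (Or.inl rfl)
  · exact (lexCycle_adj hm).2 (Or.inr rfl)

lemma isCycleFactor_permGraph_skewRotation [NeZero m] [NeZero n] (hm : 3 ≤ m)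
    (d : ZMod m → ZMod n) {k : ℕ} (hk : m * addOrderOf (∑ p, d p) = k) :
    IsCycleFactor (lexCycle m n) (permGraph (skewRotation d)) k := by
  refine isCycleFactor_permGraph (permGraph_skewRotation_le_lexCycle (by omega) d) ?_ fun v => ?_
  · exact hm.trans (hk ▸ Nat.le_mul_of_pos_right m (addOrderOf_pos _))
  · rw [minimalPeriod_skewRotation, hk]

lemma isDecomp_lexCycle_of_bijective (hm : 3 ≤ m) {ι : Type*} {d : ι → ZMod m → ZMod n}
    (hd : ∀ p, Function.Bijective fun i => d i p) :
    IsDecomp (lexCycle m n) fun i => permGraph (skewRotation (d i)) := by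
  have exists_step_iff (u v : ZMod m × ZMod n) :
      (∃ i, skewRotation (d i) u = v) ↔ v.1 = u.1 + 1 := by
    constructor
    · rintro ⟨i, rfl⟩
      rfl
    · intro h
      obtain ⟨i, hi⟩ := (hd u.1).surjective (v.2 - u.2)
      exact ⟨i, Prod.ext h.symm (by simp only [skewRotation_apply, hi, add_sub_cancel])⟩
  refine isDecomp_permGraph (fun i j v h => ?_) (fun v i j h => ?_) fun u v => ?_
  · have two_ne_zero_zmod : (2 : ZMod m) ≠ 0 := mod_cast natCast_zmod_ne_zero_of_lt two_ne_zero hm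
    have hfst : v.1 + 1 + 1 = v.1 := congrArg Prod.fst h
    rw [add_assoc, one_add_one_eq_two, add_eq_left] at hfst
    exact two_ne_zero_zmod hfst
  · exact (hd v.1).injective (add_left_cancel (congrArg Prod.snd h))
  · rw [exists_or, exists_step_iff, exists_step_iff, lexCycle_adj (by omega)]

theorem hw_lexCycle_of_bijective [NeZero m] [NeZero n] {α β : ℕ} (hm : 3 ≤ m)
    {d : Fin α ⊕ Fin β → ZMod m → ZMod n} (hd : ∀ p, Function.Bijective fun i => d i p) {k l : ℕ}
    (hk : ∀ i, m * addOrderOf (∑ p, d (Sum.inl i) p) = k)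
    (hl : ∀ j, m * addOrderOf (∑ p, d (Sum.inr j) p) = l) :
    HW (lexCycle m n) k l α β :=
  ⟨fun i => permGraph (skewRotation (d i)),
    fun i => isCycleFactor_permGraph_skewRotation hm _ (hk i),
    fun j => isCycleFactor_permGraph_skewRotation hm _ (hl j),
    isDecomp_lexCycle_of_bijective hm hd⟩

/-- The increments of the factor indexed by `y`: the linear value `c * y`, replaced at `0` by
`π y`. With `(m - 1) * c = -1` and `π = 1` they would sum to `0`. -/
def perturbedIncrement (π : Equiv.Perm (ZMod n)) (c y : ZMod n) : ZMod m → ZMod n :=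
  Function.update (fun _ => c * y) 0 (π y)

lemma bijective_perturbedIncrement (π : Equiv.Perm (ZMod n)) {c : ZMod n} (hc : IsUnit c)
    (p : ZMod m) : Function.Bijective fun y => perturbedIncrement π c y p := by
  by_cases hp : p = 0
  · simp [perturbedIncrement, hp, π.bijective]
  · simpa [perturbedIncrement, hp] using IsUnit.isUnit_iff_mulLeft_bijective.1 hc

lemma sum_perturbedIncrement [NeZero m] (π : Equiv.Perm (ZMod n)) (c y : ZMod n) :
    ∑ p : ZMod m, perturbedIncrement π c y p = π y + ((m : ZMod n) - 1) * c * y := by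
  rw [perturbedIncrement, Finset.sum_update_of_mem (Finset.mem_univ _)]
  simp [Finset.card_sdiff, Nat.cast_sub NeZero.one_le, ZMod.card, mul_assoc]

theorem hw_lexCycle_of_perm [NeZero m] [NeZero n] {α β : ℕ} (hm : 3 ≤ m)
    (hunit : IsUnit ((m : ZMod n) - 1))
    (π : Equiv.Perm (ZMod n)) {k : ℕ} (hπ : ∀ y, π y ≠ y → addOrderOf (π y - y) = k)
    (hα : Fintype.card {y // π y = y} = α) (hβ : Fintype.card {y // ¬π y = y} = β) :
    HW (lexCycle m n) m (m * k) α β := by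
  obtain ⟨c, hc⟩ := hunit.neg.exists_right_inv
  let index : Fin α ⊕ Fin β ≃ ZMod n :=
    (Equiv.sumCongr (Fintype.equivFinOfCardEq hα).symm (Fintype.equivFinOfCardEq hβ).symm).trans
      (Equiv.sumCompl _)
  have sum_eq (y : ZMod n) : ∑ p : ZMod m, perturbedIncrement π c y p = π y - y := by
    rw [sum_perturbedIncrement]
    linear_combination -y * hc
  refine hw_lexCycle_of_bijective (d := fun i => perturbedIncrement π c (index i)) hm
    (fun p => (bijective_perturbedIncrement π (.of_mul_eq_one_right _ hc) p).comp index.bijective)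
    (fun i => ?_) fun j => ?_
  · have fixed : π (index (Sum.inl i)) = index (Sum.inl i) :=
      ((Fintype.equivFinOfCardEq hα).symm i).2
    rw [sum_eq, fixed, sub_self, addOrderOf_zero, mul_one]
  · have moved : π (index (Sum.inr j)) ≠ index (Sum.inr j) :=
      ((Fintype.equivFinOfCardEq hβ).symm j).2
    rw [sum_eq, hπ _ moved]

end LexCycle

theorem stmt17 : HW (lexCycle 3 15) 3 15 8 7 := by
  let π : Equiv.Perm (ZMod 15) := c[0, 3, 6, 9, 12] * c[1, 4]
  have order_eq_five (y : ZMod 15) (hy : π y ≠ y) : addOrderOf (π y - y) = 5 := by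
    have five_nsmul : ∀ y, 5 • (π y - y) = 0 := by decide
    have : Fact (Nat.Prime 5) := ⟨Nat.prime_five⟩
    exact addOrderOf_eq_prime (five_nsmul y) (sub_ne_zero.2 hy)
  have unit : IsUnit (((3 : ℕ) : ZMod 15) - 1) := .of_mul_eq_one 8 rfl
  exact hw_lexCycle_of_perm le_rfl unit π order_eq_five (by decide) (by decide)
end

section
/- For every odd integer t > 1, ((39t − 11)/2, 5) ∈ HWP(39t; 3, 13); that is, the edge set of the complete graph K_{39t} can be partitioned into (39t − 11)/2 C_3-factors and 5 C_13-factors. -/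
open SimpleGraph

/-!
The vertices are split into `t` levels, indexed by a group `A` of order `t`, of 39 points each. For
each step `d` in a half-system of `A` (one of each pair `d, -d` of nonzero elements), base blocks of
three points are placed on the levels `x, x + d, x + 2d` and developed modulo 13. Two points whose
levels differ by `e` are joined in positions `0, 1` or `1, 2` of a block with step `±e`, or in
positions `0, 2` of a block with step `±e / 2`, according to the difference of the points. Since the
sign of `e / 2` in the half-system is arbitrary, the differences in positions `0, 2` have to be
closed under reversal. The base blocks, found by computer search, have these differences.

To split these triangles into factors, 26 blocks form two parallel classes, each translate of
which gives a factor; all translates of a block whose points have distinct types also give one.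
The remaining blocks come in groups of three, and a proper 3-colouring of the cycles of `x ↦ x -
2d` decides which block of a group is used at which level, so that all types are met at every
level. Inside the levels there are 14 triangle factors, and 5 factors consisting of a 13-cycle on
the points of each type. These are as many factors as a 2-factorization has, so it suffices that
every edge is covered.
-/

section Decomposition

variable {V W ι κ : Type*} {H : SimpleGraph V}

lemma isDecomp_iff {F : ι → SimpleGraph V} :
    IsDecomp H F ↔ (∀ u v i j, (F i).Adj u v → (F j).Adj u v → i = j) ∧
      ∀ u v, H.Adj u v ↔ ∃ i, (F i).Adj u v := by
  simp only [IsDecomp, Pairwise, Set.disjoint_left, Sym2.forall, mem_edgeSet]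
  exact and_congr_left' ⟨fun h u v i j hi hj => by_contra fun hij => h hij u v hi hj,
    fun h i j hij u v hi hj => hij (h u v i j hi hj)⟩

lemma IsDecomp.comp_equiv {F : ι → SimpleGraph V} (h : IsDecomp H F) (e : κ ≃ ι) :
    IsDecomp H (F ∘ e) :=
  ⟨fun _ _ hij => h.1 (e.injective.ne hij), fun x => (h.2 x).trans e.surjective.exists⟩

lemma IsDecomp.comap {F : ι → SimpleGraph V} (h : IsDecomp H F) (f : W → V) :
    IsDecomp (H.comap f) fun i => (F i).comap f := by
  rw [isDecomp_iff] at h ⊢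
  exact ⟨fun u v => h.1 (f u) (f v), fun u v => h.2 (f u) (f v)⟩

lemma IsCycleFactor.comap {F : SimpleGraph V} {k : ℕ} (h : IsCycleFactor H F k) (e : W ≃ V) :
    IsCycleFactor (H.comap e) (F.comap e) k := by
  obtain ⟨hle, hnbr, hreach⟩ := h
  have ncard_preimage (s : Set V) : (e ⁻¹' s).ncard = s.ncard :=
    Set.ncard_preimage_of_injective_subset_range e.injective fun x _ => e.surjective x
  refine ⟨fun _ _ huv => hle huv, fun w => (ncard_preimage _).trans (hnbr (e w)), fun w => ?_⟩
  rw [← hreach (e w), ← ncard_preimage]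
  congr 1
  ext x
  exact (Iso.reachable_iff (φ := Iso.comap e F)).symm

lemma HW.comap {m n α β : ℕ} (h : HW H m n α β) (e : W ≃ V) : HW (H.comap e) m n α β := by
  obtain ⟨F, hm, hn, hF⟩ := h
  exact ⟨fun i => (F i).comap e, fun i => (hm i).comap e, fun j => (hn j).comap e, hF.comap e⟩

lemma HW.of_isDecomp [Fintype ι] [Fintype κ] {m n : ℕ} {F : ι ⊕ κ → SimpleGraph V}
    (hF : IsDecomp H F) (hm : ∀ i, IsCycleFactor H (F (Sum.inl i)) m)
    (hn : ∀ j, IsCycleFactor H (F (Sum.inr j)) n) :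
    HW H m n (Fintype.card ι) (Fintype.card κ) :=
  let e := (Fintype.equivFin ι).symm.sumCongr (Fintype.equivFin κ).symm
  ⟨F ∘ e, fun _ => hm _, fun _ => hn _, hF.comp_equiv e⟩

/-- Counting the neighbours of a vertex leaves no room for an edge to be covered twice. -/
lemma isDecomp_top_of_cover [Finite V] [Fintype ι] {F : ι → SimpleGraph V}
    (hreg : ∀ i v, ((F i).neighborSet v).ncard = 2)
    (hcard : Nat.card V = 2 * Fintype.card ι + 1)
    (hcover : ∀ u v, u ≠ v → ∃ i, (F i).Adj u v) :
    IsDecomp (⊤ : SimpleGraph V) F := by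
  refine isDecomp_iff.2 ⟨fun u v i j hi hj => ?_, fun u v =>
    ⟨fun h => hcover u v h, fun ⟨_, h⟩ => h.ne⟩⟩
  let forget : (Σ i, (F i).neighborSet u) → ({u}ᶜ : Set V) := fun p => ⟨p.2, p.2.2.ne'⟩
  have forget_surjective : Function.Surjective forget := fun ⟨w, hw⟩ =>
    let ⟨i, hi⟩ := hcover u w (Ne.symm hw)
    ⟨⟨i, w, hi⟩, rfl⟩
  have card_le : Nat.card (Σ i, (F i).neighborSet u) ≤ Nat.card ({u}ᶜ : Set V) := by
    have hcompl := Set.ncard_singleton u ▸ Set.ncard_add_ncard_compl {u}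
    rw [Nat.card_sigma]
    simp only [Nat.card_coe_set_eq, hreg, Finset.sum_const, Finset.card_univ, smul_eq_mul]
    omega
  have forget_injective := (forget_surjective.bijective_of_nat_card_le card_le).1
  exact congrArg Sigma.fst (@forget_injective ⟨i, v, hi⟩ ⟨j, v, hj⟩ rfl)

end Decomposition

section CyclesGraph

variable {V X : Type*} {k : ℕ}

/-- The union of the closed walks `c x 0, c x 1, …, c x (k - 1), c x 0` over all `x : X`. This is a
`C_k`-factor as soon as `3 ≤ k` and `(x, i) ↦ c x i` is a bijection onto the vertices. -/
def cyclesGraph (c : X → ZMod k → V) : SimpleGraph V :=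
  SimpleGraph.fromRel fun u v => ∃ x i, c x i = u ∧ c x (i + 1) = v

variable {c : X → ZMod k → V}

lemma cyclesGraph_adj_succ (hk : 2 ≤ k) (hc : Function.Injective (Function.uncurry c)) (x : X)
    (i : ZMod k) : (cyclesGraph c).Adj (c x i) (c x (i + 1)) := by
  have : Fact (1 < k) := ⟨hk⟩
  refine (fromRel_adj ..).2 ⟨fun h => ?_, Or.inl ⟨x, i, rfl, rfl⟩⟩
  simpa using congrArg Prod.snd (@hc (x, i) (x, i + 1) h)

lemma cyclesGraph_adj_iff (hk : 2 ≤ k) (hc : Function.Injective (Function.uncurry c)) {x : X}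
    {i : ZMod k} {v : V} :
    (cyclesGraph c).Adj (c x i) v ↔ v = c x (i + 1) ∨ v = c x (i - 1) := by
  constructor
  · rintro ⟨-, ⟨y, j, hyj, rfl⟩ | ⟨y, j, rfl, hyj⟩⟩
    · obtain ⟨rfl, rfl⟩ := Prod.ext_iff.1 (@hc (y, j) (x, i) hyj)
      exact Or.inl rfl
    · obtain ⟨rfl, rfl⟩ := Prod.ext_iff.1 (@hc (y, j + 1) (x, i) hyj)
      exact Or.inr (by simp)
  · rintro (rfl | rfl)
    · exact cyclesGraph_adj_succ hk hc x i
    · simpa using (cyclesGraph_adj_succ hk hc x (i - 1)).symm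

lemma cyclesGraph_reachable_iff (hk : 2 ≤ k) (hc : Function.Injective (Function.uncurry c)) {x : X}
    {i : ZMod k} {v : V} : (cyclesGraph c).Reachable (c x i) v ↔ v ∈ Set.range (c x) := by
  constructor
  · intro h
    rw [reachable_iff_reflTransGen] at h
    induction h with
    | refl => exact ⟨i, rfl⟩
    | tail _ hadj ih =>
      obtain ⟨j, rfl⟩ := ih
      rcases (cyclesGraph_adj_iff hk hc).1 hadj with rfl | rfl
      exacts [⟨_, rfl⟩, ⟨_, rfl⟩]
  · have : NeZero k := ⟨by omega⟩
    have reachable_add (n : ℕ) : (cyclesGraph c).Reachable (c x i) (c x (i + n)) := by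
      induction n with
      | zero => simp
      | succ n ih =>
        rw [Nat.cast_succ, ← add_assoc]
        exact ih.trans (cyclesGraph_adj_succ hk hc x _).reachable
    rintro ⟨j, rfl⟩
    simpa using reachable_add (j - i).val

lemma isCycleFactor_cyclesGraph (hk : 3 ≤ k) (hc : Function.Bijective (Function.uncurry c)) :
    IsCycleFactor ⊤ (cyclesGraph c) k := by
  have hk2 : 2 ≤ k := by omega
  refine ⟨le_top, fun v => ?_, fun v => ?_⟩ <;> obtain ⟨⟨x, i⟩, rfl⟩ := hc.2 v
  · have neighborSet_eq :
        (cyclesGraph c).neighborSet (c x i) = {c x (i + 1), c x (i - 1)} := by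
      ext w
      exact cyclesGraph_adj_iff hk2 hc.1
    have two_ne_zero : (2 : ZMod k) ≠ 0 := by
      rw [← Nat.cast_two, Ne, ZMod.natCast_eq_zero_iff]
      exact Nat.not_dvd_of_pos_of_lt two_pos hk
    refine neighborSet_eq ▸ Set.ncard_pair fun h => two_ne_zero ?_
    have : i + 1 = i - 1 := congrArg Prod.snd (@hc.1 (x, i + 1) (x, i - 1) h)
    linear_combination this
  · have reachable_eq :
        {w | (cyclesGraph c).Reachable (c x i) w} = Set.range (c x) := by
      ext w
      exact cyclesGraph_reachable_iff hk2 hc.1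
    have c_injective : Function.Injective (c x) := fun i j h =>
      congrArg Prod.snd (@hc.1 (x, i) (x, j) h)
    exact reachable_eq ▸ (Set.ncard_range_of_injective c_injective).trans (Nat.card_zmod k)

lemma hwpodd_of_cyclesGraph_cover {ι κ Y : Type*} [Fintype V] [Fintype ι] [Fintype κ] {l : ℕ}
    (hk : 3 ≤ k) (hl : 3 ≤ l) {c : ι → X → ZMod k → V} {d : κ → Y → ZMod l → V}
    (hc : ∀ i, Function.Bijective (Function.uncurry (c i)))
    (hd : ∀ j, Function.Bijective (Function.uncurry (d j)))
    (hcard : Fintype.card V = 2 * (Fintype.card ι + Fintype.card κ) + 1)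
    (hcover : ∀ u v, u ≠ v →
      (∃ i, (cyclesGraph (c i)).Adj u v) ∨ ∃ j, (cyclesGraph (d j)).Adj u v) :
    HWPodd (Fintype.card V) k l (Fintype.card ι) (Fintype.card κ) := by
  let F : ι ⊕ κ → SimpleGraph V := Sum.elim (fun i => cyclesGraph (c i)) fun j => cyclesGraph (d j)
  have hm (i : ι) : IsCycleFactor ⊤ (F (Sum.inl i)) k := isCycleFactor_cyclesGraph hk (hc i)
  have hn (j : κ) : IsCycleFactor ⊤ (F (Sum.inr j)) l := isCycleFactor_cyclesGraph hl (hd j)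
  have hF : IsDecomp ⊤ F := isDecomp_top_of_cover
    (Sum.rec (fun i => (hm i).2.1) fun j => (hn j).2.1) (by simpa using hcard)
    fun u v huv => Sum.exists.2 (hcover u v huv)
  let e : Fin (Fintype.card V) ≃ V := (Fintype.equivFin V).symm
  have comap_top_eq : (⊤ : SimpleGraph V).comap e = ⊤ := comap_top e.injective
  rw [HWPodd, ← comap_top_eq]
  exact (HW.of_isDecomp hF hm hn).comap e

end CyclesGraph

lemma exists_three_coloring {V : Type*} [Finite V] (σ : Equiv.Perm V) :
    ∃ κ : V → ZMod 3, ∀ v, σ v ≠ v → κ v ≠ κ (σ v) := by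
  classical
  have := Fintype.ofFinite V
  suffices greedy : ∀ s : Finset V, ∃ κ : V → ZMod 3,
      ∀ v ∈ s, σ v ∈ s → σ v ≠ v → κ v ≠ κ (σ v) by
    simpa using greedy Finset.univ
  intro s
  induction s using Finset.induction_on with
  | empty => simp
  | insert a s _ ih =>
    obtain ⟨κ, hκ⟩ := ih
    have exists_third : ∀ p q : ZMod 3, ∃ r, r ≠ p ∧ r ≠ q := by decide
    obtain ⟨r, hr_next, hr_prev⟩ := exists_third (κ (σ a)) (κ (σ.symm a))
    refine ⟨Function.update κ a r, fun v hv hσv hne => ?_⟩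
    obtain rfl | hva := eq_or_ne v a
    · rwa [Function.update_self, Function.update_of_ne hne]
    obtain hσva | hσva := eq_or_ne (σ v) a
    · rw [hσva, Function.update_self, Function.update_of_ne hva]
      rw [← hσva, σ.symm_apply_apply] at hr_prev
      exact hr_prev.symm
    · rw [Function.update_of_ne hva, Function.update_of_ne hσva]
      exact hκ v (Finset.mem_of_mem_insert_of_ne hv hva)
        (Finset.mem_of_mem_insert_of_ne hσv hσva) hne

section Blocks

/-- The points of a level: a point `(p, y)` has *type* `p`, and the translations act on `y` only. -/
abbrev Point := ZMod 3 × ZMod 13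

/-- An ordered triple of points. Positions are cyclically ordered, as in a triangle. -/
abbrev Block := ZMod 3 → Point

/-- The translate of the block `B` by `g`. -/
def Block.translate (B : Block) (g : ZMod 13) : Block := fun j => B j + (0, g)

lemma Block.exists_translate_apply_eq {B : Block} {j : ZMod 3} {a : Point} (h : (B j).1 = a.1) :
    ∃ g, B.translate g j = a :=
  ⟨a.2 - (B j).2, by ext <;> simp [Block.translate, h]⟩

/-- Some translate of one of the blocks `B n` has `a` in position `j` and `b` in the cyclically
next position. -/
def JoinedAt {N : Type*} (B : N → Block) (j : ZMod 3) (a b : Point) : Prop :=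
  ∃ n g, (B n).translate g j = a ∧ (B n).translate g (j + 1) = b

lemma joinedAt_iff {N : Type*} {B : N → Block} {j : ZMod 3} {a b : Point} :
    JoinedAt B j a b ↔ ∃ n, (B n j).1 = a.1 ∧ B n (j + 1) - B n j = b - a := by
  refine exists_congr fun n => ⟨?_, fun ⟨htype, hdiff⟩ => ?_⟩
  · rintro ⟨g, rfl, rfl⟩
    simp [Block.translate]
  · obtain ⟨g, rfl⟩ := Block.exists_translate_apply_eq htype
    refine ⟨g, rfl, ?_⟩
    rw [← sub_left_inj, ← hdiff]
    simp [Block.translate]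

end Blocks

section InterLevel

/-- The two parallel classes of base blocks: each partitions the 39 points into 13 blocks. -/
def parallelBlock : Fin 2 → ZMod 13 → Block :=
  ![![![(1, 3), (2, 11), (1, 12)],
      ![(2, 8), (0, 7), (2, 10)],
      ![(2, 4), (2, 9), (0, 12)],
      ![(2, 6), (1, 0), (2, 0)],
      ![(0, 9), (0, 2), (1, 8)],
      ![(0, 11), (0, 6), (0, 10)],
      ![(0, 0), (1, 5), (1, 10)],
      ![(2, 5), (2, 1), (1, 11)],
      ![(1, 2), (0, 8), (1, 9)],
      ![(1, 1), (2, 2), (2, 3)],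
      ![(0, 4), (0, 1), (2, 12)],
      ![(0, 5), (2, 7), (0, 3)],
      ![(1, 6), (1, 4), (1, 7)]],
    ![![(2, 10), (0, 7), (2, 8)],
      ![(2, 11), (1, 3), (0, 12)],
      ![(2, 9), (2, 4), (1, 12)],
      ![(2, 0), (1, 0), (2, 6)],
      ![(1, 8), (0, 2), (0, 9)],
      ![(0, 10), (0, 6), (0, 11)],
      ![(1, 10), (1, 5), (0, 0)],
      ![(1, 11), (2, 1), (2, 5)],
      ![(1, 9), (0, 8), (1, 2)],
      ![(2, 3), (2, 2), (1, 1)],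
      ![(2, 12), (0, 1), (0, 4)],
      ![(0, 3), (2, 7), (0, 5)],
      ![(1, 7), (1, 4), (1, 6)]]]

/-- Three groups of three base blocks. The types of the points in the blocks of a group are
`(u, w, v)`, `(u, w, u)` and `(v, w, v)`, in this order, where `u, w, v` are the three types. -/
def groupedBlock : Fin 3 → ZMod 3 → Block :=
  ![![![(1, 0), (0, 5), (2, 11)],
      ![(1, 0), (0, 11), (1, 0)],
      ![(2, 0), (0, 0), (2, 10)]],
    ![![(2, 0), (0, 4), (1, 2)],
      ![(2, 0), (0, 7), (2, 3)],
      ![(1, 0), (0, 0), (1, 4)]],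
    ![![(2, 0), (1, 4), (0, 6)],
      ![(2, 0), (1, 9), (2, 0)],
      ![(0, 0), (1, 9), (0, 0)]]]

/-- The four base blocks that are developed on their own; each of them meets every type. -/
def transversalBlock : Fin 4 → Block :=
  ![![(1, 0), (0, 10), (2, 10)],
    ![(0, 0), (1, 0), (2, 5)],
    ![(0, 0), (1, 8), (2, 7)],
    ![(0, 0), (1, 3), (2, 12)]]

/-- Indices of the 39 base blocks of the inter-level construction. The same type indexes the 39
triangle factors made from them, see `interLevelBlock`. -/
inductive BlockIndex
  | parallel (s : Fin 2) (i : ZMod 13)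
  | grouped (r : Fin 3) (i : ZMod 3)
  | transversal (q : Fin 4)
  deriving Fintype

lemma card_blockIndex : Fintype.card BlockIndex = 39 := rfl

/-- The base block with a given index. -/
def baseBlock : BlockIndex → Block
  | .parallel s i => parallelBlock s i
  | .grouped r i => groupedBlock r i
  | .transversal q => transversalBlock q

lemma exists_parallelBlock_eq : ∀ s a, ∃ j i, parallelBlock s i j = a := by decide +kernel

lemma exists_transversalBlock_fst_eq : ∀ q p, ∃ j, (transversalBlock q j).1 = p := by
  decide +kernel

lemma baseBlock_differences : ∀ (p : ZMod 3) (δ : Point),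
    (∃ n, (baseBlock n 0).1 = p ∧ baseBlock n (0 + 1) - baseBlock n 0 = δ) ∨
    (∃ n, (baseBlock n 1).1 = p ∧ baseBlock n (1 + 1) - baseBlock n 1 = δ) ∨
    (∃ n, (baseBlock n 2).1 = p ∧ baseBlock n (2 + 1) - baseBlock n 2 = δ) ∧
      ∃ n, (baseBlock n 2).1 = p + δ.1 ∧ baseBlock n (2 + 1) - baseBlock n 2 = -δ := by
  decide +kernel

lemma joinedAt_baseBlock (a b : Point) :
    JoinedAt baseBlock 0 a b ∨ JoinedAt baseBlock 1 a b ∨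
      JoinedAt baseBlock 2 a b ∧ JoinedAt baseBlock 2 b a := by
  simpa only [joinedAt_iff, neg_sub, Prod.fst_sub, add_sub_cancel] using
    baseBlock_differences a.1 (b - a)

/-- Which block of a group is placed at a level with colour `a` whose second predecessor has
colour `b`, in the factor of colour `c`. -/
def groupSelector (c a b : ZMod 3) : ZMod 3 := if c = a then 1 else if c = b then 2 else 0

lemma exists_groupSelector_eq : ∀ a b i, a ≠ b → ∃ c, groupSelector c a b = i := by decide

-- With `u, w, v` as in `groupedBlock`: if `c = b`, the blocks starting at a level of colour `a`
-- have first type `v` and those ending there have last type `u`; otherwise it is the reverse.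
lemma groupedBlock_fst_cover : ∀ r c a b b' i, a ≠ b → b ≠ b' → ∀ p,
    (groupedBlock r (groupSelector c a b) 0).1 = p ∨ (groupedBlock r i 1).1 = p ∨
      (groupedBlock r (groupSelector c b b') 2).1 = p := by
  decide +kernel

variable {A : Type*} [AddCommGroup A] {κ : A → ZMod 3} {d : A}

/-- The blocks starting at level `x` in the triangle factor `f` of step `d`: a fixed translate of a
parallel class, or all translates of one base block. -/
def interLevelBlock (κ : A → ZMod 3) (d : A) : BlockIndex → A → ZMod 13 → Block
  | .parallel s g, _, i => (parallelBlock s i).translate g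
  | .grouped r c, x, g => (groupedBlock r (groupSelector c (κ x) (κ (x - 2 • d)))).translate g
  | .transversal q, _, g => (transversalBlock q).translate g

lemma exists_interLevelBlock_eq (hκ : ∀ x, κ x ≠ κ (x - 2 • d)) (x : A) (n : BlockIndex)
    (g : ZMod 13) : ∃ f y, interLevelBlock κ d f x y = (baseBlock n).translate g := by
  match n with
  | .parallel s i => exact ⟨.parallel s g, i, rfl⟩
  | .grouped r i =>
    obtain ⟨c, rfl⟩ := exists_groupSelector_eq (κ x) (κ (x - 2 • d)) i (hκ x)
    exact ⟨.grouped r c, g, rfl⟩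
  | .transversal q => exact ⟨.transversal q, g, rfl⟩

lemma exists_interLevelBlock_apply_eq (hκ : ∀ x, κ x ≠ κ (x - 2 • d)) (f : BlockIndex) (x : A)
    (a : Point) : ∃ j y, interLevelBlock κ d f (x - j.val • d) y j = a := by
  match f with
  | .parallel s g =>
    obtain ⟨j, i, h⟩ := exists_parallelBlock_eq s (a - (0, g))
    exact ⟨j, i, by simp [interLevelBlock, Block.translate, h]⟩
  | .grouped r c =>
    suffices ∃ j : ZMod 3, (groupedBlock r (groupSelector c (κ (x - j.val • d))
        (κ (x - j.val • d - 2 • d))) j).1 = a.1 from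
      this.imp fun _ => Block.exists_translate_apply_eq
    have val_two : (2 : ZMod 3).val = 2 := rfl
    rcases groupedBlock_fst_cover r c (κ x) (κ (x - 2 • d)) (κ (x - 2 • d - 2 • d))
      (groupSelector c (κ (x - d)) (κ (x - d - 2 • d))) (hκ x) (hκ _) a.1 with h | h | h
    · exact ⟨0, by simpa using h⟩
    · exact ⟨1, by simpa [ZMod.val_one] using h⟩
    · exact ⟨2, by simpa [val_two] using h⟩
  | .transversal q =>
    obtain ⟨j, h⟩ := exists_transversalBlock_fst_eq q a.1
    exact ⟨j, Block.exists_translate_apply_eq h⟩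

end InterLevel

section IntraLevel

/-- Base blocks inside a level: a parallel class, and the block `none` meeting every type. -/
def levelBlock : Option (ZMod 13) → Block
  | some i =>
    (![![(1, 1), (0, 11), (1, 7)],
       ![(0, 10), (0, 6), (2, 3)],
       ![(1, 3), (2, 2), (0, 1)],
       ![(2, 0), (2, 1), (1, 5)],
       ![(2, 9), (1, 6), (0, 0)],
       ![(0, 12), (2, 6), (1, 4)],
       ![(0, 9), (2, 12), (1, 8)],
       ![(2, 4), (1, 12), (0, 2)],
       ![(2, 5), (1, 11), (0, 7)],
       ![(2, 8), (1, 2), (0, 4)],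
       ![(2, 11), (1, 10), (0, 3)],
       ![(0, 5), (1, 0), (2, 10)],
       ![(0, 8), (1, 9), (2, 7)]] : ZMod 13 → Block) i
  | none => fun j => (j, 0)

/-- `longCycleStep p k` is the step of the `k`-th 13-cycle on the points of type `p` of a level. -/
def longCycleStep : ZMod 3 → Fin 5 → ZMod 13 :=
  ![![1, 2, 3, 5, 6],
    ![1, 2, 3, 4, 5],
    ![2, 3, 4, 5, 6]]

lemma longCycleStep_ne_zero : ∀ p k, longCycleStep p k ≠ 0 := by decide +kernel

lemma exists_levelBlock_some_eq : ∀ a, ∃ j i, levelBlock (some i) j = a := by decide +kernel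

lemma levelBlock_differences : ∀ (p : ZMod 3) (δ : Point), δ ≠ 0 →
    (∃ j n, (levelBlock n j).1 = p ∧ levelBlock n (j + 1) - levelBlock n j = δ) ∨
    (∃ j n, (levelBlock n j).1 = p + δ.1 ∧ levelBlock n (j + 1) - levelBlock n j = -δ) ∨
    ∃ k, δ = (0, longCycleStep p k) ∨ δ = (0, -longCycleStep p k) := by
  decide +kernel

lemma joinedAt_levelBlock {a b : Point} (hab : a ≠ b) :
    (∃ j, JoinedAt levelBlock j a b) ∨ (∃ j, JoinedAt levelBlock j b a) ∨
      ∃ k, b = a + (0, longCycleStep a.1 k) ∨ a = b + (0, longCycleStep b.1 k) := by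
  rcases levelBlock_differences a.1 (b - a) (sub_ne_zero.2 hab.symm) with h | h | ⟨k, h | h⟩
  · exact Or.inl (by simpa only [joinedAt_iff] using h)
  · refine Or.inr (Or.inl ?_)
    simpa only [joinedAt_iff, neg_sub, Prod.fst_sub, add_sub_cancel] using h
  · exact Or.inr (Or.inr ⟨k, Or.inl (sub_eq_iff_eq_add'.1 h)⟩)
  · have same_type : b.1 = a.1 := sub_eq_zero.1 (congrArg Prod.fst h)
    refine Or.inr (Or.inr ⟨k, Or.inr ?_⟩)
    rw [same_type, ← sub_eq_iff_eq_add', ← neg_sub, h]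
    simp

/-- The blocks inside each level of a triangle factor: a translate of the parallel class, or all
translates of the block `none`. -/
def intraLevelBlock : Option (ZMod 13) → ZMod 13 → Block
  | some g, i => (levelBlock (some i)).translate g
  | none, g => (levelBlock none).translate g

lemma exists_intraLevelBlock_eq (n : Option (ZMod 13)) (g : ZMod 13) :
    ∃ f y, intraLevelBlock f y = (levelBlock n).translate g :=
  match n with
  | some i => ⟨some g, i, rfl⟩
  | none => ⟨none, g, rfl⟩

lemma exists_intraLevelBlock_apply_eq (f : Option (ZMod 13)) (a : Point) :
    ∃ j y, intraLevelBlock f y j = a := by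
  match f with
  | some g =>
    obtain ⟨j, i, h⟩ := exists_levelBlock_some_eq (a - (0, g))
    exact ⟨j, i, by simp [intraLevelBlock, Block.translate, h]⟩
  | none => exact ⟨a.1, Block.exists_translate_apply_eq rfl⟩

/-- The `k`-th family of 13-cycles inside the levels, one cycle for each level and type. -/
def longCycle {A : Type*} (k : Fin 5) (xp : A × ZMod 3) (i : ZMod 13) : A × Point :=
  (xp.1, xp.2, i * longCycleStep xp.2 k)

lemma longCycle_bijective {A : Type*} (k : Fin 5) :
    Function.Bijective (Function.uncurry (longCycle (A := A) k)) := by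
  have : Fact (Nat.Prime 13) := ⟨by norm_num⟩
  constructor
  · rintro ⟨⟨x, p⟩, i⟩ ⟨⟨y, q⟩, j⟩ h
    simp only [Function.uncurry_apply_pair, longCycle, Prod.mk.injEq] at h
    obtain ⟨rfl, rfl, h⟩ := h
    rw [mul_left_injective₀ (longCycleStep_ne_zero p k) h]
  · rintro ⟨x, p, y⟩
    refine ⟨⟨⟨x, p⟩, y / longCycleStep p k⟩, ?_⟩
    simp [longCycle, div_mul_cancel₀ y (longCycleStep_ne_zero p k)]

lemma longCycle_adj {A : Type*} (k : Fin 5) (x : A) (a : Point) :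
    (cyclesGraph (longCycle k)).Adj (x, a) (x, a + (0, longCycleStep a.1 k)) := by
  obtain ⟨⟨⟨y, p⟩, i⟩, h⟩ := (longCycle_bijective k).2 (x, a)
  simp only [Function.uncurry_apply_pair, longCycle, Prod.mk.injEq] at h
  obtain ⟨rfl, rfl⟩ := h
  simpa [longCycle, add_one_mul] using
    cyclesGraph_adj_succ (by norm_num) (longCycle_bijective k).1 (y, p) i

end IntraLevel

section LevelTriangles

variable {A : Type*} [AddCommGroup A]

/-- The triangles spread with step `d`: for each level `x`, a block `B x y` gives a triangle whose
vertices in positions `0, 1, 2` lie in the levels `x`, `x + d`, `x + 2d`. -/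
def levelTriangle (d : A) (B : A → ZMod 13 → Block) (xy : A × ZMod 13) (j : ZMod 3) : A × Point :=
  (xy.1 + j.val • d, B xy.1 xy.2 j)

lemma levelTriangle_bijective [Finite A] {d : A} {B : A → ZMod 13 → Block}
    (hB : ∀ x a, ∃ j y, B (x - j.val • d) y j = a) :
    Function.Bijective (Function.uncurry (levelTriangle d B)) := by
  refine Function.Surjective.bijective_of_nat_card_le ?_ (by simp [mul_assoc])
  rintro ⟨x, a⟩
  obtain ⟨j, y, rfl⟩ := hB x a
  exact ⟨⟨⟨x - j.val • d, y⟩, j⟩, by simp [levelTriangle]⟩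

/-- The triangles of the factor `f` of step `d`, where `κ` is a colouring of the levels. -/
def interLevelTriangle (κ : A → ZMod 3) (d : A) (f : BlockIndex) :
    A × ZMod 13 → ZMod 3 → A × Point :=
  levelTriangle d (interLevelBlock κ d f)

/-- The triangles of the factor `f` inside the levels. -/
def intraLevelTriangle (f : Option (ZMod 13)) : A × ZMod 13 → ZMod 3 → A × Point :=
  levelTriangle 0 fun _ => intraLevelBlock f

variable [Finite A]

lemma interLevelTriangle_bijective {κ : A → ZMod 3} {d : A} (hκ : ∀ x, κ x ≠ κ (x - 2 • d))
    (f : BlockIndex) : Function.Bijective (Function.uncurry (interLevelTriangle κ d f)) :=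
  levelTriangle_bijective (exists_interLevelBlock_apply_eq hκ f)

lemma intraLevelTriangle_bijective (f : Option (ZMod 13)) :
    Function.Bijective (Function.uncurry (intraLevelTriangle (A := A) f)) :=
  levelTriangle_bijective fun _ => exists_intraLevelBlock_apply_eq f

lemma JoinedAt.exists_interLevelTriangle_adj {κ : A → ZMod 3} {d : A}
    (hκ : ∀ x, κ x ≠ κ (x - 2 • d)) {j : ZMod 3} {a b : Point} (h : JoinedAt baseBlock j a b)
    (x : A) : ∃ f, (cyclesGraph (interLevelTriangle κ d f)).Adj
      (x + j.val • d, a) (x + (j + 1).val • d, b) := by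
  obtain ⟨n, g, rfl, rfl⟩ := h
  obtain ⟨f, y, hf⟩ := exists_interLevelBlock_eq hκ x n g
  refine ⟨f, ?_⟩
  rw [← hf]
  exact cyclesGraph_adj_succ (by norm_num) (interLevelTriangle_bijective hκ f).1 (x, y) j

lemma JoinedAt.exists_intraLevelTriangle_adj {j : ZMod 3} {a b : Point}
    (h : JoinedAt levelBlock j a b) (x : A) :
    ∃ f, (cyclesGraph (intraLevelTriangle f)).Adj (x, a) (x, b) := by
  obtain ⟨n, g, rfl, rfl⟩ := h
  obtain ⟨f, y, hf⟩ := exists_intraLevelBlock_eq n g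
  refine ⟨f, ?_⟩
  rw [← hf]
  simpa [intraLevelTriangle, levelTriangle] using
    cyclesGraph_adj_succ (by norm_num) (intraLevelTriangle_bijective f).1 (x, y) j

lemma intraLevel_cover (x : A) {a b : Point} (hab : a ≠ b) :
    (∃ f, (cyclesGraph (intraLevelTriangle f)).Adj (x, a) (x, b)) ∨
      ∃ k, (cyclesGraph (longCycle k)).Adj (x, a) (x, b) := by
  rcases joinedAt_levelBlock hab with ⟨j, h⟩ | ⟨j, h⟩ | ⟨k, h | h⟩
  · exact Or.inl (h.exists_intraLevelTriangle_adj x)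
  · exact Or.inl ((h.exists_intraLevelTriangle_adj x).imp fun _ => Adj.symm)
  · exact Or.inr ⟨k, h ▸ longCycle_adj k x a⟩
  · exact Or.inr ⟨k, h ▸ (longCycle_adj k x b).symm⟩

variable {S : Type*} {D : S → A} {κ : S → A → ZMod 3}

lemma interLevel_cover_of_step (hκ : ∀ s x, κ s x ≠ κ s (x - 2 • D s))
    (hD : ∀ e ≠ 0, ∃ s, D s = e ∨ D s = -e)
    (h2 : Function.Surjective fun a : A => 2 • a) (s : S) (hs : D s ≠ 0) (x : A) (a b : Point) :
    ∃ s' f, (cyclesGraph (interLevelTriangle (κ s') (D s') f)).Adj (x, a) (x + D s, b) := by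
  have val_two : (2 : ZMod 3).val = 2 := rfl
  have two_add_one : (2 + 1 : ZMod 3) = 0 := rfl
  have one_add_one : (1 + 1 : ZMod 3) = 2 := rfl
  rcases joinedAt_baseBlock a b with h | h | ⟨hab, hba⟩
  · exact ⟨s, by simpa [ZMod.val_one] using h.exists_interLevelTriangle_adj (hκ s) x⟩
  · exact ⟨s, by simpa [ZMod.val_one, one_add_one, val_two, two_nsmul, ← add_assoc] using
      h.exists_interLevelTriangle_adj (hκ s) (x - D s)⟩
  · obtain ⟨e, he : 2 • e = D s⟩ := h2 (D s)
    have he0 : e ≠ 0 := by rintro rfl; exact hs (by simpa using he.symm)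
    obtain ⟨s', hs' | hs'⟩ := hD e he0
    · refine ⟨s', ?_⟩
      obtain ⟨f, hf⟩ := hba.exists_interLevelTriangle_adj (hκ s') x
      rw [two_add_one, val_two, hs', he] at hf
      exact ⟨f, by simpa [hs'] using hf.symm⟩
    · refine ⟨s', ?_⟩
      obtain ⟨f, hf⟩ := hab.exists_interLevelTriangle_adj (hκ s') (x + D s)
      rw [two_add_one, val_two, hs', smul_neg, he] at hf
      exact ⟨f, by simpa [hs'] using hf⟩

lemma interLevel_cover (hκ : ∀ s x, κ s x ≠ κ s (x - 2 • D s))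
    (hD : ∀ e ≠ 0, ∃ s, D s = e ∨ D s = -e)
    (h2 : Function.Surjective fun a : A => 2 • a) {x y : A} (hxy : x ≠ y) (a b : Point) :
    ∃ s f, (cyclesGraph (interLevelTriangle (κ s) (D s) f)).Adj (x, a) (y, b) := by
  obtain ⟨s, hs | hs⟩ := hD (y - x) (sub_ne_zero.2 hxy.symm)
  · have := interLevel_cover_of_step hκ hD h2 s (hs ▸ sub_ne_zero.2 hxy.symm) x a b
    rwa [hs, add_sub_cancel] at this
  · rw [neg_sub] at hs
    obtain ⟨s', f, h⟩ := interLevel_cover_of_step hκ hD h2 s (hs ▸ sub_ne_zero.2 hxy) y b a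
    rw [hs, add_sub_cancel] at h
    exact ⟨s', f, h.symm⟩

end LevelTriangles

lemma hwpodd_of_halfSystem {A S : Type*} [AddCommGroup A] [Fintype A] [Fintype S] {D : S → A}
    (hcard : Fintype.card A = 2 * Fintype.card S + 1) (hD0 : ∀ s, D s ≠ 0)
    (hD : ∀ e ≠ 0, ∃ s, D s = e ∨ D s = -e) :
    HWPodd (Fintype.card A * 39) 3 13 (Fintype.card S * 39 + 14) 5 := by
  have two_nsmul_bijective : Function.Bijective fun a : A => 2 • a :=
    Nat.Coprime.nsmul_right_bijective (by simp [hcard])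
  have coloring (s : S) : ∃ κ : A → ZMod 3, ∀ x, κ x ≠ κ (x - 2 • D s) := by
    obtain ⟨κ, hκ⟩ := exists_three_coloring (Equiv.subRight (2 • D s))
    have step_ne_zero : 2 • D s ≠ 0 := (two_nsmul_bijective.1.ne_iff' (smul_zero 2)).2 (hD0 s)
    exact ⟨κ, fun x => hκ x (by simpa using step_ne_zero)⟩
  choose κ hκ using coloring
  let triangle : (S × BlockIndex) ⊕ Option (ZMod 13) → A × ZMod 13 → ZMod 3 → A × Point :=
    Sum.elim (fun sf => interLevelTriangle (κ sf.1) (D sf.1) sf.2) intraLevelTriangle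
  have triangle_bijective : ∀ i, Function.Bijective (Function.uncurry (triangle i)) :=
    Sum.rec (fun sf => interLevelTriangle_bijective (hκ sf.1) sf.2) intraLevelTriangle_bijective
  have card_vertices : Fintype.card (A × Point) = Fintype.card A * 39 := by simp
  have card_factors : Fintype.card ((S × BlockIndex) ⊕ Option (ZMod 13)) =
      Fintype.card S * 39 + 14 := by
    simp [card_blockIndex]
  rw [← card_vertices, ← card_factors, ← Fintype.card_fin 5]
  refine hwpodd_of_cyclesGraph_cover le_rfl (by norm_num) triangle_bijective longCycle_bijective
    (by rw [card_vertices, card_factors, Fintype.card_fin]; omega) ?_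
  rintro ⟨x, a⟩ ⟨y, b⟩ hne
  obtain rfl | hxy := eq_or_ne x y
  · exact (intraLevel_cover x fun hab => hne (congrArg _ hab)).imp_left
      fun ⟨f, hf⟩ => ⟨Sum.inr f, hf⟩
  · obtain ⟨s, f, hf⟩ := interLevel_cover hκ hD two_nsmul_bijective.2 hxy a b
    exact Or.inl ⟨Sum.inl (s, f), hf⟩

lemma exists_natCast_succ_eq_or_eq_neg {m : ℕ} {e : ZMod (2 * m + 1)} (he : e ≠ 0) :
    ∃ s : Fin m, ((s + 1 : ℕ) : ZMod (2 * m + 1)) = e ∨ ((s + 1 : ℕ) : ZMod (2 * m + 1)) = -e := by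
  have val_lt := ZMod.val_lt e
  have val_ne_zero : e.val ≠ 0 := (ZMod.val_eq_zero e).not.2 he
  obtain h | h := le_or_gt e.val m
  · refine ⟨⟨e.val - 1, by omega⟩, Or.inl ?_⟩
    rw [Nat.sub_add_cancel (by omega), ZMod.natCast_zmod_val]
  · refine ⟨⟨2 * m - e.val, by omega⟩, Or.inr ?_⟩
    rw [← Nat.sub_add_comm (by omega), Nat.cast_sub val_lt.le, ZMod.natCast_zmod_val,
      ZMod.natCast_self, zero_sub]

lemma zmod_natCast_succ_ne_zero {m : ℕ} (s : Fin m) : ((s + 1 : ℕ) : ZMod (2 * m + 1)) ≠ 0 := by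
  rw [Ne, ZMod.natCast_eq_zero_iff]
  exact Nat.not_dvd_of_pos_of_lt s.val.succ_pos (by omega)

theorem stmt19_general (t : ℕ) (ht : Odd t) : HWPodd (39 * t) 3 13 ((39 * t - 11) / 2) 5 := by
  obtain ⟨m, rfl⟩ := ht
  have factorization := hwpodd_of_halfSystem (A := ZMod (2 * m + 1)) (S := Fin m)
    (by simp) zmod_natCast_succ_ne_zero fun _ => exists_natCast_succ_eq_or_eq_neg
  rw [ZMod.card, Fintype.card_fin] at factorization
  convert factorization using 1 <;> omega

theorem stmt19 (t : ℕ) (ht : Odd t) (h1 : 1 < t) :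
    HWPodd (39 * t) 3 13 ((39 * t - 11) / 2) 5 :=
  stmt19_general t ht
end
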